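/- Let f be a deep linear fully connected network of depth d and width n, and let Θ be its neural tangent kernel. Then for all fixed inputs x, x' ∈ ℝ^{d_0} there exists a constant K (depending on d, d_0, x, x' but not on n) such that Var_θ[Θ(x,x')] = E_θ[Θ(x,x')^2] − (E_θ[Θ(x,x')])^2 ≤ K / n for all n ≥ 1. -/

import Mathlib

open MeasureTheory ProbabilityTheory

namespace DeepLinearFC

/-- Parameter index type for a deep linear fully connected network of depth `d` and width `n`
on inputs in `ℝ^{d0}`: the readout vector `v` (`Fin n`), the first-layer matrix `W^(1)`
(`Fin n × Fin d0`), and the higher-layer matrices `W^(2), …, W^(d)`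
(`Fin (d-1) × Fin n × Fin n`). -/
abbrev Param (d0 d n : ℕ) : Type :=
  Fin n ⊕ (Fin n × Fin d0) ⊕ (Fin (d - 1) × Fin n × Fin n)

/-- Hidden activations: `hidden d0 d n θ x ℓ` is `W^(ℓ+1) ⋯ W^(2) W^(1) x`. -/
def hidden (d0 d n : ℕ) (θ : Param d0 d n → ℝ) (x : Fin d0 → ℝ) : ℕ → Fin n → ℝ
  | 0 => fun i => ∑ j : Fin d0, θ (.inr (.inl (i, j))) * x j
  | ℓ + 1 => fun i => ∑ j : Fin n,
      (if h : ℓ < d - 1 then θ (.inr (.inr (⟨ℓ, h⟩, i, j))) else 0) * hidden d0 d n θ x ℓ j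

/-- The deep linear fully connected network
`f(x) = n^{-d/2} d0^{-1/2} vᵀ W^(d) ⋯ W^(2) W^(1) x`. -/
noncomputable def net (d0 d n : ℕ) (θ : Param d0 d n → ℝ) (x : Fin d0 → ℝ) : ℝ :=
  (Real.sqrt ((n : ℝ) ^ d * (d0 : ℝ)))⁻¹ *
    ∑ i : Fin n, θ (.inl i) * hidden d0 d n θ x (d - 1) i

/-- All parameters are i.i.d. standard Gaussians. -/
noncomputable def gaussParam (d0 d n : ℕ) : Measure (Param d0 d n → ℝ) :=
  Measure.pi fun _ => gaussianReal 0 1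

/-- The neural tangent kernel `Θ(x,x') = Σ_μ ∂f(x)/∂θ_μ ⬝ ∂f(x')/∂θ_μ`. -/
noncomputable def NTK (d0 d n : ℕ) (θ : Param d0 d n → ℝ) (x x' : Fin d0 → ℝ) : ℝ :=
  ∑ μ : Param d0 d n,
    fderiv ℝ (fun θ' => net d0 d n θ' x) θ (Pi.single μ 1) *
    fderiv ℝ (fun θ' => net d0 d n θ' x') θ (Pi.single μ 1)

open scoped ENNReal

/-!
The kernel `Θ` is a symmetric bilinear form in the inputs, so by polarization
`Θ(x, x') = ¼ [Θ(x + x', x + x') - Θ(x - x', x - x')]` it suffices to treat the diagonal. The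
gradient of the network in a single layer is a rank-one matrix, whence
`Θ(x, x) = (n^d d0)⁻¹ ∑ₖ |bₖ|² |hₖ|²`, where `hₖ` is the input to layer `k` and `bₖ` the
backpropagated readout. A standard Gaussian matrix maps a vector `p` to a vector distributed as
`|p| ξ` with `ξ` standard Gaussian, and the layers are independent, so each `|bₖ|² |hₖ|²` has
the first two moments of `|x|²` times a product of `d` independent `χ²ₙ` variables, namely
`n^d |x|²` and `(n (n + 2))^d |x|⁴`. Its relative variance is therefore `(1 + 2/n)^d - 1`, which
by convexity is at most `(3^d - 1) / n`.
-/

section Variance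

variable {Ω ι : Type*} {mΩ : MeasurableSpace Ω} {P : Measure Ω} [IsFiniteMeasure P]

lemma variance_sub_le_two_mul {X Y : Ω → ℝ} (hX : MemLp X 2 P) (hY : MemLp Y 2 P) :
    Var[fun ω => X ω - Y ω; P] ≤ 2 * (Var[X; P] + Var[Y; P]) := by
  have parallelogram :
      Var[fun ω => X ω - Y ω; P] + Var[fun ω => X ω + Y ω; P] = 2 * (Var[X; P] + Var[Y; P]) := by
    rw [variance_fun_sub hX hY, variance_fun_add hX hY]
    ring
  linarith [variance_nonneg (fun ω => X ω + Y ω) P]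

lemma variance_sum_le_card_mul_sum_variance {X : ι → Ω → ℝ} {s : Finset ι}
    (hX : ∀ i ∈ s, MemLp (X i) 2 P) :
    Var[fun ω => ∑ i ∈ s, X i ω; P] ≤ (s.card : ℝ) * ∑ i ∈ s, Var[X i; P] := by
  have centered (i) (hi : i ∈ s) : MemLp (fun ω => X i ω - P[X i]) 2 P :=
    (hX i hi).sub (memLp_const _)
  have mean : P[fun ω => ∑ i ∈ s, X i ω] = ∑ i ∈ s, P[X i] :=
    integral_finsetSum _ fun i hi => (hX i hi).integrable one_le_two
  rw [variance_eq_integral (memLp_finsetSum s hX).aemeasurable, mean]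
  calc ∫ ω, (∑ i ∈ s, X i ω - ∑ i ∈ s, P[X i]) ^ 2 ∂P
      ≤ ∫ ω, (s.card : ℝ) * ∑ i ∈ s, (X i ω - P[X i]) ^ 2 ∂P := by
        refine integral_mono ?_ ?_ fun ω => ?_
        · simp_rw [← Finset.sum_sub_distrib]
          exact (memLp_finsetSum s centered).integrable_sq
        · exact (integrable_finsetSum s fun i hi => (centered i hi).integrable_sq).const_mul _
        · simp only [← Finset.sum_sub_distrib]
          exact sq_sum_le_card_mul_sum_sq
    _ = s.card * ∑ i ∈ s, Var[X i; P] := by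
        rw [integral_const_mul, integral_finsetSum _ fun i hi => (centered i hi).integrable_sq]
        congr 1
        exact Finset.sum_congr rfl fun i hi => (variance_eq_integral (hX i hi).aemeasurable).symm

end Variance

lemma one_add_mul_pow_le {a t : ℝ} (ha : 0 ≤ a) (ht₀ : 0 ≤ t) (ht₁ : t ≤ 1) (d : ℕ) :
    (1 + t * a) ^ d ≤ 1 + t * ((1 + a) ^ d - 1) := by
  have chord := (convexOn_pow (𝕜 := ℝ) d).2 (x := 1) (y := 1 + a) (by simp)
    (Set.mem_Ici.2 (by linarith)) (sub_nonneg.2 ht₁) ht₀ (by ring)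
  simp only [smul_eq_mul, one_pow] at chord
  calc (1 + t * a) ^ d = ((1 - t) * 1 + t * (1 + a)) ^ d := by ring
    _ ≤ (1 - t) * 1 + t * (1 + a) ^ d := chord
    _ = 1 + t * ((1 + a) ^ d - 1) := by ring

lemma integral_pow_add_two_gaussianReal (v : NNReal) (m : ℕ) :
    ∫ x, x ^ (m + 2) ∂gaussianReal 0 v = (m + 1) * v * ∫ x, x ^ m ∂gaussianReal 0 v := by
  have moment (k : ℕ) :
      iteratedDeriv k (fun t => Real.exp (v * t ^ 2 / 2)) 0 = ∫ x, x ^ k ∂gaussianReal 0 v := by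
    have h := iteratedDeriv_mgf_zero (X := id) (μ := gaussianReal 0 v) (by simp) k
    simpa [mgf_id_gaussianReal] using h
  have deriv_exp : deriv (fun t : ℝ => Real.exp (v * t ^ 2 / 2)) =
      fun t => v * (t * Real.exp (v * t ^ 2 / 2)) := by
    ext t
    have := (((hasDerivAt_pow 2 t).const_mul (v : ℝ)).div_const 2).exp
    rw [this.deriv]
    push_cast
    ring
  rw [← moment, ← moment, iteratedDeriv_succ', deriv_exp, iteratedDeriv_const_mul_field,
    iteratedDeriv_fun_mul (by fun_prop) (by fun_prop), Finset.sum_eq_single 1]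
  · simp only [Nat.choose_one_right, Nat.cast_add, Nat.cast_one, iteratedDeriv_fun_id_zero,
      ↓reduceIte, mul_one, add_tsub_cancel_right]
    ring
  · intro k _ hk
    simp [iteratedDeriv_fun_id_zero, hk]
  · simp

lemma integral_sq_gaussianReal (v : NNReal) : ∫ x, x ^ 2 ∂gaussianReal 0 v = v := by
  simpa using integral_pow_add_two_gaussianReal v 0

lemma memLp_two_sq_gaussianReal (v : NNReal) : MemLp (fun x => x ^ 2) 2 (gaussianReal 0 v) := by
  refine (memLp_two_iff_integrable_sq (by fun_prop)).2 ?_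
  have h := (memLp_id_gaussianReal' (μ := 0) (v := v) 4 (by simp)).integrable_norm_pow'
  simpa [← pow_mul, Even.pow_abs (n := 4) ⟨2, rfl⟩] using h

lemma variance_sq_gaussianReal (v : NNReal) :
    Var[fun x => x ^ 2; gaussianReal 0 v] = 2 * v ^ 2 := by
  have fourth_moment : ∫ x, x ^ 4 ∂gaussianReal 0 v = 3 * v ^ 2 := by
    have h := integral_pow_add_two_gaussianReal v 2
    rw [integral_sq_gaussianReal] at h
    norm_num at h ⊢
    rw [h]
    ring
  rw [variance_eq_sub (memLp_two_sq_gaussianReal v), integral_sq_gaussianReal]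
  simp only [Pi.pow_apply, ← pow_mul, fourth_moment]
  ring

/-- The law of a vector of i.i.d. standard Gaussians indexed by `ι`. -/
noncomputable abbrev gaussianPi (ι : Type*) [Fintype ι] : Measure (ι → ℝ) :=
  Measure.pi fun _ => gaussianReal 0 1

section GaussianPi

variable {I J : Type*} [Fintype I] [Fintype J]

lemma map_sum_mul_gaussianPi (p : J → ℝ) :
    (gaussianPi J).map (fun w => ∑ j, w j * p j) =
      gaussianReal 0 (∑ j, p j ^ 2).toNNReal := by
  have pushforward : (gaussianPi J).map (fun w => ∑ j, w j * p j) =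
      ((gaussianPi J).map fun w j => w j * p j).map (fun w => ∑ j, w j) := by
    rw [Measure.map_map (by fun_prop) (by fun_prop)]
    rfl
  rw [pushforward, Measure.pi_map_pi (f := fun j x => x * p j) fun j => by fun_prop]
  simp_rw [gaussianReal_map_mul_const]
  refine Measure.ext_of_charFun ?_
  ext t
  have : 0 ≤ ∑ j, p j ^ 2 := by positivity
  simp [charFun_map_sum_pi_eq_prod, charFun_gaussianReal, ← Complex.exp_sum,
    Real.coe_toNNReal _ this, Finset.sum_mul, Finset.sum_div]

lemma map_sqrt_mul_gaussianPi {q : ℝ} (hq : 0 ≤ q) :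
    (gaussianPi I).map (fun ξ i => √q * ξ i) =
      Measure.pi fun _ => gaussianReal 0 q.toNNReal := by
  rw [Measure.pi_map_pi (f := fun _ x => √q * x) fun _ => by fun_prop]
  simp_rw [gaussianReal_map_const_mul]
  simp [Real.sq_sqrt hq, Real.toNNReal_of_nonneg hq]

lemma map_curry_gaussianPi :
    (gaussianPi (I × J)).map (MeasurableEquiv.curry I J ℝ) = Measure.pi fun _ => gaussianPi J := by
  simp only [gaussianPi, ← Measure.infinitePi_eq_pi]
  exact Measure.infinitePi_map_curry fun _ _ => gaussianReal 0 1

lemma map_mulVec_gaussianPi (p : J → ℝ) :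
    (gaussianPi (I × J)).map (fun W i => ∑ j, W (i, j) * p j) =
      (gaussianPi I).map fun ξ i => √(∑ j, p j ^ 2) * ξ i := by
  calc (gaussianPi (I × J)).map (fun W i => ∑ j, W (i, j) * p j)
      = ((gaussianPi (I × J)).map (MeasurableEquiv.curry I J ℝ)).map
          (fun W i => ∑ j, W i j * p j) := by
        rw [Measure.map_map (by fun_prop) (by fun_prop)]
        rfl
    _ = Measure.pi fun _ => gaussianReal 0 (∑ j, p j ^ 2).toNNReal := by
        rw [map_curry_gaussianPi,
          Measure.pi_map_pi (f := fun _ (w : J → ℝ) => ∑ j, w j * p j)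
            fun _ => Measurable.aemeasurable (by fun_prop)]
        simp_rw [map_sum_mul_gaussianPi]
    _ = (gaussianPi I).map fun ξ i => √(∑ j, p j ^ 2) * ξ i :=
        (map_sqrt_mul_gaussianPi (by positivity)).symm

lemma memLp_two_sum_sq_gaussianPi : MemLp (fun ξ => ∑ i, ξ i ^ 2) 2 (gaussianPi I) :=
  memLp_finsetSum _ fun i _ =>
    (memLp_two_sq_gaussianReal 1).comp_measurePreserving (measurePreserving_eval _ i)

lemma integral_sum_sq_gaussianPi : ∫ ξ, ∑ i, ξ i ^ 2 ∂gaussianPi I = Fintype.card I := by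
  have coordinate (i : I) : ∫ ξ, ξ i ^ 2 ∂gaussianPi I = 1 := by
    rw [integral_comp_eval (μ := fun _ : I => gaussianReal 0 1) (f := fun x => x ^ 2)
      (by fun_prop), integral_sq_gaussianReal, NNReal.coe_one]
  rw [integral_finsetSum]
  · simp [coordinate]
  · exact fun i _ => ((memLp_two_sq_gaussianReal 1).comp_measurePreserving
      (measurePreserving_eval _ i)).integrable one_le_two

lemma variance_sum_sq_gaussianPi :
    Var[fun ξ => ∑ i, ξ i ^ 2; gaussianPi I] = 2 * Fintype.card I := by
  have h := variance_sum_pi (X := fun (_ : I) (x : ℝ) => x ^ 2)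
    fun _ => memLp_two_sq_gaussianReal 1
  simpa [Finset.sum_fn, variance_sq_gaussianReal, mul_comm] using h

/-- The moment `E[|ξ|^(2s)]` of a standard Gaussian vector `ξ` with coordinates indexed by `I`, that
is, the `s`-th moment of a chi-squared variable with `|I|` degrees of freedom. -/
noncomputable def gaussianNormSqMoment (I : Type*) [Fintype I] (s : ℕ) : ℝ≥0∞ :=
  ∫⁻ ξ, ENNReal.ofReal (∑ i, ξ i ^ 2) ^ s ∂gaussianPi I

lemma gaussianNormSqMoment_one : gaussianNormSqMoment I 1 = Fintype.card I := by
  simp only [gaussianNormSqMoment, pow_one]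
  rw [← ofReal_integral_eq_lintegral_ofReal
    (memLp_two_sum_sq_gaussianPi.integrable one_le_two)
    (Filter.Eventually.of_forall fun ξ => by positivity), integral_sum_sq_gaussianPi,
    ENNReal.ofReal_natCast]

lemma gaussianNormSqMoment_two :
    gaussianNormSqMoment I 2 = Fintype.card I * (Fintype.card I + 2) := by
  have second_moment : ∫ ξ, (∑ i, ξ i ^ 2) ^ 2 ∂gaussianPi I =
      Fintype.card I * (Fintype.card I + 2) := by
    have h := variance_eq_sub (memLp_two_sum_sq_gaussianPi (I := I))
    rw [variance_sum_sq_gaussianPi, integral_sum_sq_gaussianPi] at h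
    simp only [Pi.pow_apply] at h
    linarith
  have ofReal_pow (ξ : I → ℝ) :
      ENNReal.ofReal (∑ i, ξ i ^ 2) ^ 2 = ENNReal.ofReal ((∑ i, ξ i ^ 2) ^ 2) :=
    (ENNReal.ofReal_pow (by positivity) 2).symm
  simp_rw [gaussianNormSqMoment, ofReal_pow]
  rw [← ofReal_integral_eq_lintegral_ofReal memLp_two_sum_sq_gaussianPi.integrable_sq
    (Filter.Eventually.of_forall fun ξ => by positivity), second_moment]
  norm_cast

lemma lintegral_normSq_mulVec_gaussianPi (p : J → ℝ) (s : ℕ) :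
    ∫⁻ W, ENNReal.ofReal (∑ i, (∑ j, W (i, j) * p j) ^ 2) ^ s ∂gaussianPi (I × J) =
      gaussianNormSqMoment I s * ENNReal.ofReal (∑ j, p j ^ 2) ^ s := by
  have measurable_normSq_pow :
      Measurable fun y : I → ℝ => ENNReal.ofReal (∑ i, y i ^ 2) ^ s := by fun_prop
  calc ∫⁻ W, ENNReal.ofReal (∑ i, (∑ j, W (i, j) * p j) ^ 2) ^ s ∂gaussianPi (I × J)
      = ∫⁻ y, ENNReal.ofReal (∑ i, y i ^ 2) ^ s
          ∂(gaussianPi (I × J)).map fun W i => ∑ j, W (i, j) * p j :=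
        (lintegral_map measurable_normSq_pow (by fun_prop)).symm
    _ = ∫⁻ ξ, ENNReal.ofReal (∑ i, (√(∑ j, p j ^ 2) * ξ i) ^ 2) ^ s ∂gaussianPi I := by
        rw [map_mulVec_gaussianPi, lintegral_map measurable_normSq_pow (by fun_prop)]
    _ = ∫⁻ ξ, ENNReal.ofReal (∑ i, ξ i ^ 2) ^ s * ENNReal.ofReal (∑ j, p j ^ 2) ^ s
          ∂gaussianPi I := by
        have normSq_nonneg : 0 ≤ ∑ j, p j ^ 2 := by positivity
        simp_rw [mul_pow, Real.sq_sqrt normSq_nonneg, ← Finset.mul_sum,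
          ENNReal.ofReal_mul normSq_nonneg, mul_pow, mul_comm]
    _ = gaussianNormSqMoment I s * ENNReal.ofReal (∑ j, p j ^ 2) ^ s :=
        lintegral_mul_const _ measurable_normSq_pow

end GaussianPi

section Resampling

section Extend

variable {ι κ α : Type*} {e : κ → ι}

lemma measurable_extend [MeasurableSpace α] (he : e.Injective) :
    Measurable fun z : (ι → α) × (κ → α) => Function.extend e z.2 z.1 := by
  refine measurable_pi_lambda _ fun i => ?_
  by_cases hi : ∃ k, e k = i
  · obtain ⟨k, rfl⟩ := hi
    simp only [he.extend_apply]
    fun_prop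
  · simp only [Function.extend_apply' _ _ _ hi]
    fun_prop

open Classical in
lemma preimage_extend_univ_pi (he : e.Injective) (s : ι → Set α) :
    (fun z : (ι → α) × (κ → α) => Function.extend e z.2 z.1) ⁻¹' Set.univ.pi s =
      (Set.univ.pi fun i => if i ∈ Set.range e then Set.univ else s i) ×ˢ
        Set.univ.pi fun k => s (e k) := by
  ext z
  simp only [Set.mem_preimage, Set.mem_univ_pi, Set.mem_prod]
  constructor
  · refine fun h => ⟨fun i => ?_, fun k => by simpa [he.extend_apply] using h (e k)⟩
    split_ifs with hi
    · trivial
    · simpa [Function.extend_apply' _ _ _ hi] using h i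
  · rintro ⟨h_off, h_on⟩ i
    by_cases hi : i ∈ Set.range e
    · obtain ⟨k, rfl⟩ := hi
      simpa [he.extend_apply] using h_on k
    · simpa [Function.extend_apply' _ _ _ hi, hi] using h_off i

lemma measurePreserving_extend [Fintype ι] [Fintype κ] [MeasurableSpace α]
    (ν : ι → Measure α) [∀ i, IsProbabilityMeasure (ν i)] (he : e.Injective) :
    MeasurePreserving (fun z : (ι → α) × (κ → α) => Function.extend e z.2 z.1)
      ((Measure.pi ν).prod (Measure.pi fun k => ν (e k))) (Measure.pi ν) := by
  classical
  refine ⟨measurable_extend he, (Measure.pi_eq fun s hs => ?_).symm⟩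
  have prod_range : ∏ k, ν (e k) (s (e k)) = ∏ i with i ∈ Set.range e, ν i (s i) := by
    rw [← Finset.prod_image (g := e) (f := fun i => ν i (s i)) he.injOn]
    congr 1
    ext i
    simp
  rw [Measure.map_apply (measurable_extend he) (MeasurableSet.univ_pi hs),
    preimage_extend_univ_pi he, Measure.prod_prod, Measure.pi_pi, Measure.pi_pi, prod_range]
  simp only [apply_ite, measure_univ]
  rw [Finset.prod_ite, Finset.prod_const_one, one_mul, mul_comm,
    Finset.prod_filter_mul_prod_filter_not]

end Extend

variable {ι I J : Type*} [Fintype ι] [Fintype I] [Fintype J]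

lemma lintegral_mul_normSq_mulVec {e : I × J → ι} (he : e.Injective)
    {A : (ι → ℝ) → ℝ≥0∞} (hA : Measurable A) (hAe : DependsOn A (Set.range e)ᶜ)
    {p : (ι → ℝ) → J → ℝ} (hp : Measurable p) (hpe : DependsOn p (Set.range e)ᶜ) (s : ℕ) :
    ∫⁻ θ, A θ * ENNReal.ofReal (∑ i, (∑ j, θ (e (i, j)) * p θ j) ^ 2) ^ s ∂gaussianPi ι =
      gaussianNormSqMoment I s *
        ∫⁻ θ, A θ * ENNReal.ofReal (∑ j, p θ j ^ 2) ^ s ∂gaussianPi ι := by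
  have extend_eqOn (θ : ι → ℝ) (W : I × J → ℝ) :
      ∀ μ ∈ (Set.range e)ᶜ, Function.extend e W θ μ = θ μ :=
    fun μ hμ => Function.extend_apply' _ _ _ hμ
  have measurable_entry (j : J) : Measurable fun θ => p θ j := (measurable_pi_apply j).comp hp
  -- Resampling the coordinates `e (i, j)` preserves the law of `θ` and does not affect `A`, `p`.
  have resample := measurePreserving_extend (fun _ : ι => gaussianReal 0 1) he
  rw [← resample.lintegral_comp (by fun_prop), lintegral_prod _
    (Measurable.aemeasurable (by have := resample.measurable; fun_prop))]
  simp only [fun θ W => hAe (extend_eqOn θ W), fun θ W => hpe (extend_eqOn θ W), he.extend_apply]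
  rw [← lintegral_const_mul _ (by fun_prop)]
  refine lintegral_congr fun θ => ?_
  rw [lintegral_const_mul _ (by fun_prop), lintegral_normSq_mulVec_gaussianPi]
  ring

end Resampling

section Gradient

variable {ι I J : Type*} [Finite ι] [DecidableEq ι] [Fintype I] [Fintype J]
  {e : I × J → ι} {f : (ι → ℝ) → ℝ} {b : (ι → ℝ) → I → ℝ} {p : (ι → ℝ) → J → ℝ} {θ : ι → ℝ}

lemma fderiv_apply_single_of_bilinear (he : e.Injective)
    (hb : DependsOn b (Set.range e)ᶜ) (hp : DependsOn p (Set.range e)ᶜ)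
    (hf : ∀ θ, f θ = ∑ i, b θ i * ∑ j, θ (e (i, j)) * p θ j)
    (hd : DifferentiableAt ℝ f θ) (i : I) (j : J) :
    fderiv ℝ f θ (Pi.single (e (i, j)) 1) = b θ i * p θ j := by
  classical
  have := Fintype.ofFinite ι
  have affine (t : ℝ) : f (θ + t • Pi.single (e (i, j)) 1) = f θ + t * (b θ i * p θ j) := by
    have eqOn : ∀ μ ∈ (Set.range e)ᶜ, (θ + t • Pi.single (e (i, j)) 1 : ι → ℝ) μ = θ μ := by
      intro μ hμ
      have : μ ≠ e (i, j) := fun h => hμ ⟨_, h.symm⟩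
      simp [this]
    rw [hf, hf, hb eqOn, hp eqOn]
    simp only [Pi.add_apply, Pi.smul_apply, Pi.single_apply, he.eq_iff, Prod.mk.injEq, ite_and,
      smul_eq_mul, mul_ite, mul_one, mul_zero, add_mul, ite_mul, zero_mul,
      Finset.sum_add_distrib, Finset.sum_ite_irrel, Finset.sum_ite_eq', Finset.mem_univ,
      ↓reduceIte, Finset.sum_const_zero, mul_add, add_right_inj]
    ring
  rw [← hd.lineDeriv_eq_fderiv, lineDeriv]
  simp_rw [affine]
  simp

lemma sum_sq_fderiv_apply_single_of_bilinear (he : e.Injective)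
    (hb : DependsOn b (Set.range e)ᶜ) (hp : DependsOn p (Set.range e)ᶜ)
    (hf : ∀ θ, f θ = ∑ i, b θ i * ∑ j, θ (e (i, j)) * p θ j)
    (hd : DifferentiableAt ℝ f θ) :
    ∑ k, fderiv ℝ f θ (Pi.single (e k) 1) ^ 2 = (∑ i, b θ i ^ 2) * ∑ j, p θ j ^ 2 := by
  simp_rw [Fintype.sum_prod_type, fderiv_apply_single_of_bilinear he hb hp hf hd, mul_pow,
    Finset.sum_mul_sum]

end Gradient

section Network

variable {d0 d n : ℕ}

/-- The layer a parameter belongs to: `ℓ` for `W^(ℓ+1)` and `d` for the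
readout `v`. -/
def layer : Param d0 d n → ℕ
  | .inl _ => d
  | .inr (.inl _) => 0
  | .inr (.inr (ℓ, _)) => ℓ + 1

/-- The matrix `W^(ℓ+2)`, with the convention of `hidden` that it vanishes for `ℓ ≥ d - 1`. -/
def weight (θ : Param d0 d n → ℝ) (ℓ : ℕ) (i j : Fin n) : ℝ :=
  if h : ℓ < d - 1 then θ (.inr (.inr (⟨ℓ, h⟩, i, j))) else 0

/-- The backpropagated readout `(vᵀ W^(d) ⋯ W^(d-r+1))ᵀ`, meaningful for `r ≤ d - 1`. -/
def backward (θ : Param d0 d n → ℝ) : ℕ → Fin n → ℝ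
  | 0 => fun i => θ (.inl i)
  | r + 1 => fun j => ∑ i, weight θ (d - 1 - (r + 1)) i j * backward θ r i

/-- `|W^(k) ⋯ W^(1) x|²`, including the input norm `|x|²` at `k = 0`. -/
def forwardNormSq (θ : Param d0 d n → ℝ) (x : Fin d0 → ℝ) : ℕ → ℝ
  | 0 => ∑ j, x j ^ 2
  | k + 1 => ∑ i, hidden d0 d n θ x k i ^ 2

/-- `|vᵀ W^(d) ⋯ W^(d-r+2)|²`, the squared norm of a product of `r` factors and
equal to `1` at `r = 0`. -/
def backwardNormSq (θ : Param d0 d n → ℝ) : ℕ → ℝ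
  | 0 => 1
  | r + 1 => ∑ i, backward θ r i ^ 2

lemma hidden_succ (θ : Param d0 d n → ℝ) (x : Fin d0 → ℝ) (k : ℕ) (i : Fin n) :
    hidden d0 d n θ x (k + 1) i = ∑ j, weight θ k i j * hidden d0 d n θ x k j := rfl

lemma weight_coe (θ : Param d0 d n → ℝ) (ℓ : Fin (d - 1)) (i j : Fin n) :
    weight θ ℓ i j = θ (.inr (.inr (ℓ, i, j))) := dif_pos ℓ.2

section Dependence

lemma preimage_layer_subset_compl_range {κ : Type*} {e : κ → Param d0 d n} {L : Set ℕ}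
    (h : ∀ k, layer (e k) ∉ L) : layer ⁻¹' L ⊆ (Set.range e)ᶜ := by
  rintro _ hL ⟨k, rfl⟩
  exact h k hL

lemma dependsOn_weight (ℓ : ℕ) :
    DependsOn (fun θ : Param d0 d n → ℝ => weight θ ℓ) (layer ⁻¹' {ℓ + 1}) := by
  intro θ θ' h
  ext i j
  dsimp only [weight]
  split_ifs with hℓ
  · exact h _ rfl
  · rfl

lemma dependsOn_hidden (x : Fin d0 → ℝ) (k : ℕ) :
    DependsOn (fun θ => hidden d0 d n θ x k) (layer ⁻¹' Set.Iic k) := by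
  intro θ θ' h
  induction k with
  | zero =>
    ext i
    exact Finset.sum_congr rfl fun j _ => by
      rw [h (.inr (.inl (i, j))) (by simp [layer])]
  | succ k ih =>
    have weight_eq : weight θ k = weight θ' k :=
      dependsOn_weight k fun μ hμ => h μ (Set.mem_Iic.2 hμ.le)
    have hidden_eq : hidden d0 d n θ x k = hidden d0 d n θ' x k :=
      ih fun μ hμ => h μ (Set.Iic_subset_Iic.2 k.le_succ hμ)
    ext i
    simp only [hidden_succ, weight_eq, hidden_eq]

lemma dependsOn_backward (r : ℕ) :
    DependsOn (fun θ : Param d0 d n → ℝ => backward θ r) (layer ⁻¹' Set.Ici (d - r)) := by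
  intro θ θ' h
  induction r with
  | zero =>
    ext i
    exact h _ (Set.mem_Ici.2 (Nat.sub_le d 0))
  | succ r ih =>
    have weight_eq : weight θ (d - 1 - (r + 1)) = weight θ' (d - 1 - (r + 1)) :=
      dependsOn_weight _ fun μ hμ => h μ <| by
        simp only [Set.mem_preimage, Set.mem_singleton_iff, Set.mem_Ici] at hμ ⊢
        lia
    have backward_eq : backward θ r = backward θ' r :=
      ih fun μ hμ => h μ (Set.Ici_subset_Ici.2 (Nat.sub_le_sub_left r.le_succ d) hμ)
    ext j
    simp only [backward, weight_eq, backward_eq]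

lemma dependsOn_backwardNormSq (r : ℕ) :
    DependsOn (fun θ : Param d0 d n → ℝ => backwardNormSq θ r)
      (layer ⁻¹' Set.Ici (d + 1 - r)) := by
  intro θ θ' h
  cases r with
  | zero => rfl
  | succ r =>
    have backward_eq : backward θ r = backward θ' r :=
      dependsOn_backward r fun μ hμ => h μ <| by
        simpa only [Nat.add_sub_add_right] using hμ
    simp only [backwardNormSq, backward_eq]

end Dependence

section Regularity

@[fun_prop]
lemma differentiable_weight (ℓ : ℕ) (i j : Fin n) :
    Differentiable ℝ fun θ : Param d0 d n → ℝ => weight θ ℓ i j := by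
  unfold weight
  split_ifs <;> fun_prop

@[fun_prop]
lemma differentiable_hidden (x : Fin d0 → ℝ) (k : ℕ) (i : Fin n) :
    Differentiable ℝ fun θ => hidden d0 d n θ x k i := by
  induction k generalizing i with
  | zero =>
    unfold hidden
    fun_prop
  | succ k ih =>
    simp only [hidden_succ]
    fun_prop

@[fun_prop]
lemma differentiable_backward (r : ℕ) (i : Fin n) :
    Differentiable ℝ fun θ : Param d0 d n → ℝ => backward θ r i := by
  induction r generalizing i with
  | zero =>
    unfold backward
    fun_prop
  | succ r ih =>
    unfold backward
    fun_prop

lemma differentiable_net (x : Fin d0 → ℝ) : Differentiable ℝ fun θ => net d0 d n θ x := by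
  unfold net
  fun_prop

lemma measurable_hidden (x : Fin d0 → ℝ) (k : ℕ) : Measurable fun θ => hidden d0 d n θ x k :=
  measurable_pi_lambda _ fun i => (differentiable_hidden x k i).continuous.measurable

lemma measurable_backward (r : ℕ) : Measurable fun θ : Param d0 d n → ℝ => backward θ r :=
  measurable_pi_lambda _ fun i => (differentiable_backward r i).continuous.measurable

lemma measurable_forwardNormSq (x : Fin d0 → ℝ) (k : ℕ) :
    Measurable fun θ : Param d0 d n → ℝ => forwardNormSq θ x k := by
  cases k with
  | zero => exact measurable_const
  | succ k =>
    have := measurable_hidden (d := d) (n := n) x k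
    unfold forwardNormSq
    fun_prop

lemma measurable_backwardNormSq (r : ℕ) :
    Measurable fun θ : Param d0 d n → ℝ => backwardNormSq θ r := by
  cases r with
  | zero => exact measurable_const
  | succ r =>
    have := measurable_backward (d0 := d0) (d := d) (n := n) r
    unfold backwardNormSq
    fun_prop

end Regularity

lemma forwardNormSq_nonneg (θ : Param d0 d n → ℝ) (x : Fin d0 → ℝ) (k : ℕ) :
    0 ≤ forwardNormSq θ x k := by
  cases k <;> exact Finset.sum_nonneg fun _ _ => sq_nonneg _

lemma backwardNormSq_nonneg (θ : Param d0 d n → ℝ) (r : ℕ) : 0 ≤ backwardNormSq θ r := by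
  cases r
  · exact zero_le_one
  · exact Finset.sum_nonneg fun _ _ => sq_nonneg _

section Moments

lemma lintegral_mul_forwardNormSq_succ_pow (x : Fin d0 → ℝ) {k : ℕ} (hk : k < d)
    {A : (Param d0 d n → ℝ) → ℝ≥0∞} (hA : Measurable A)
    (hAk : DependsOn A (layer ⁻¹' Set.Ioi k)) (s : ℕ) :
    ∫⁻ θ, A θ * ENNReal.ofReal (forwardNormSq θ x (k + 1)) ^ s ∂gaussParam d0 d n =
      gaussianNormSqMoment (Fin n) s *
        ∫⁻ θ, A θ * ENNReal.ofReal (forwardNormSq θ x k) ^ s ∂gaussParam d0 d n := by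
  cases k with
  | zero =>
    exact lintegral_mul_normSq_mulVec (e := fun q : Fin n × Fin d0 => Sum.inr (Sum.inl q))
      (p := fun _ => x) (Sum.inr_injective.comp Sum.inl_injective) hA
      (hAk.mono (preimage_layer_subset_compl_range fun q => by simp [layer]))
      measurable_const (fun _ _ _ => rfl) s
  | succ k =>
    let ℓ : Fin (d - 1) := ⟨k, by lia⟩
    have h := lintegral_mul_normSq_mulVec
      (e := fun q : Fin n × Fin n => (Sum.inr (Sum.inr (ℓ, q)) : Param d0 d n))
      (Sum.inr_injective.comp (Sum.inr_injective.comp (Prod.mk_right_injective ℓ))) hA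
      (hAk.mono (preimage_layer_subset_compl_range fun q => by simp [layer, ℓ]))
      (measurable_hidden x k)
      ((dependsOn_hidden x k).mono
        (preimage_layer_subset_compl_range fun q => by simp [layer, ℓ])) s
    simp only [← weight_coe] at h
    exact h

lemma lintegral_mul_forwardNormSq_pow (x : Fin d0 → ℝ) {k : ℕ} (hk : k ≤ d)
    {A : (Param d0 d n → ℝ) → ℝ≥0∞} (hA : Measurable A)
    (hAk : DependsOn A (layer ⁻¹' Set.Ici k)) (s : ℕ) :
    ∫⁻ θ, A θ * ENNReal.ofReal (forwardNormSq θ x k) ^ s ∂gaussParam d0 d n =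
      gaussianNormSqMoment (Fin n) s ^ k * ENNReal.ofReal (∑ j, x j ^ 2) ^ s *
        ∫⁻ θ, A θ ∂gaussParam d0 d n := by
  induction k with
  | zero => simp only [forwardNormSq, lintegral_mul_const _ hA, pow_zero, one_mul, mul_comm]
  | succ k ih =>
    rw [lintegral_mul_forwardNormSq_succ_pow x hk hA hAk,
      ih (by lia) (hAk.mono (Set.preimage_mono (Set.Ici_subset_Ici.2 k.le_succ))), pow_succ]
    ring

lemma lintegral_backwardNormSq_succ_pow {r : ℕ} (hr : r < d) (s : ℕ) :
    ∫⁻ θ, ENNReal.ofReal (backwardNormSq θ (r + 1)) ^ s ∂gaussParam d0 d n =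
      gaussianNormSqMoment (Fin n) s *
        ∫⁻ θ, ENNReal.ofReal (backwardNormSq θ r) ^ s ∂gaussParam d0 d n := by
  cases r with
  | zero =>
    have h := lintegral_mul_normSq_mulVec (A := 1) (p := fun _ _ => 1)
      (e := fun q : Fin n × Unit => (Sum.inl q.1 : Param d0 d n))
      (Sum.inl_injective.comp (Equiv.prodPUnit _).injective) measurable_const (fun _ _ _ => rfl)
      measurable_const (fun _ _ _ => rfl) s
    simpa [backwardNormSq, backward, gaussParam] using h
  | succ r =>
    let ℓ : Fin (d - 1) := ⟨d - 1 - (r + 1), by lia⟩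
    have h := lintegral_mul_normSq_mulVec (A := 1)
      (e := fun q : Fin n × Fin n => (Sum.inr (Sum.inr (ℓ, q.swap)) : Param d0 d n))
      (Sum.inr_injective.comp (Sum.inr_injective.comp
        ((Prod.mk_right_injective ℓ).comp Prod.swap_injective)))
      measurable_const (fun _ _ _ => rfl) (measurable_backward r)
      ((dependsOn_backward r).mono
        (preimage_layer_subset_compl_range fun q => by
          simp only [layer, ℓ, Set.mem_Ici]
          lia)) s
    simp only [Prod.swap_prod_mk, Pi.one_apply, one_mul, ← weight_coe] at h
    exact h

lemma lintegral_backwardNormSq_pow {r : ℕ} (hr : r ≤ d) (s : ℕ) :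
    ∫⁻ θ, ENNReal.ofReal (backwardNormSq θ r) ^ s ∂gaussParam d0 d n =
      gaussianNormSqMoment (Fin n) s ^ r := by
  induction r with
  | zero => simp [backwardNormSq, gaussParam]
  | succ r ih => rw [lintegral_backwardNormSq_succ_pow hr, ih (by lia), pow_succ']

end Moments

section Kernel

/-- The squared norm of the gradient of the network at `x` with respect to the layer `k`, without
the normalization `(n^d d0)⁻¹`: that gradient is the rank-one matrix with entries `b i * h j`
where `b` is backpropagated from the readout and `h` is the input to the layer. -/
def layerKernel (θ : Param d0 d n → ℝ) (x : Fin d0 → ℝ) (k : ℕ) : ℝ :=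
  backwardNormSq θ (d - k) * forwardNormSq θ x k

lemma sum_backward_mul_hidden (θ : Param d0 d n → ℝ) (x : Fin d0 → ℝ) {r k : ℕ}
    (h : r + k = d - 1) :
    ∑ i, backward θ r i * hidden d0 d n θ x k i =
      ∑ i, θ (.inl i) * hidden d0 d n θ x (d - 1) i := by
  induction r generalizing k with
  | zero =>
    obtain rfl : k = d - 1 := by lia
    rfl
  | succ r ih =>
    obtain rfl : k = d - 1 - (r + 1) := by lia
    have peel := ih (k := d - 1 - (r + 1) + 1) (by lia)
    simp only [hidden_succ, Finset.mul_sum] at peel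
    rw [← peel, Finset.sum_comm]
    simp only [backward, Finset.sum_mul]
    exact Finset.sum_congr rfl fun j _ => Finset.sum_congr rfl fun i _ => by ring

lemma sum_sq_fderiv_net {I J : Type*} [Fintype I] [Fintype J] {e : I × J → Param d0 d n}
    (he : e.Injective) {b : (Param d0 d n → ℝ) → I → ℝ} {p : (Param d0 d n → ℝ) → J → ℝ}
    (hb : DependsOn b (Set.range e)ᶜ) (hp : DependsOn p (Set.range e)ᶜ) {x : Fin d0 → ℝ}
    (hnet : ∀ θ, ∑ i, θ (.inl i) * hidden d0 d n θ x (d - 1) i =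
      ∑ i, b θ i * ∑ j, θ (e (i, j)) * p θ j) (θ : Param d0 d n → ℝ) :
    ∑ k, fderiv ℝ (fun θ => net d0 d n θ x) θ (Pi.single (e k) 1) ^ 2 =
      ((n : ℝ) ^ d * d0)⁻¹ * ((∑ i, b θ i ^ 2) * ∑ j, p θ j ^ 2) := by
  have scaled_dependsOn :
      DependsOn (fun θ i => (√((n : ℝ) ^ d * d0))⁻¹ * b θ i) (Set.range e)ᶜ :=
    fun θ θ' h => by simp only [hb h]
  rw [sum_sq_fderiv_apply_single_of_bilinear he scaled_dependsOn hp
    (fun θ => by simp only [net, hnet, Finset.mul_sum, mul_assoc]) (differentiable_net x θ)]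
  simp only [mul_pow, ← Finset.mul_sum, inv_pow]
  rw [Real.sq_sqrt (by positivity), mul_assoc]

lemma sum_sq_fderiv_net_readout (hd : 1 ≤ d) (θ : Param d0 d n → ℝ) (x : Fin d0 → ℝ) :
    ∑ i : Fin n, fderiv ℝ (fun θ => net d0 d n θ x) θ (Pi.single (.inl i) 1) ^ 2 =
      ((n : ℝ) ^ d * d0)⁻¹ * layerKernel θ x d := by
  have h := sum_sq_fderiv_net
    (e := fun q : Unit × Fin n => (Sum.inl q.2 : Param d0 d n))
    (Sum.inl_injective.comp (Equiv.punitProd _).injective)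
    (b := fun _ _ => 1) (x := x) (fun _ _ _ => rfl)
    ((dependsOn_hidden x (d - 1)).mono
      (preimage_layer_subset_compl_range fun q => by
        simp only [layer, Set.mem_Iic]
        lia))
    (fun θ => by simp only [Finset.univ_unique, Finset.sum_singleton, one_mul]) θ
  obtain ⟨m, rfl⟩ : ∃ m, d = m + 1 := ⟨d - 1, by lia⟩
  simpa [Fintype.sum_prod_type, layerKernel, backwardNormSq, forwardNormSq] using h

lemma sum_sq_fderiv_net_first (hd : 1 ≤ d) (θ : Param d0 d n → ℝ) (x : Fin d0 → ℝ) :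
    ∑ q : Fin n × Fin d0,
        fderiv ℝ (fun θ => net d0 d n θ x) θ (Pi.single (.inr (.inl q)) 1) ^ 2 =
      ((n : ℝ) ^ d * d0)⁻¹ * layerKernel θ x 0 := by
  obtain ⟨m, rfl⟩ : ∃ m, d = m + 1 := ⟨d - 1, by lia⟩
  exact sum_sq_fderiv_net
    (e := fun q : Fin n × Fin d0 => (Sum.inr (Sum.inl q) : Param d0 (m + 1) n))
    (Sum.inr_injective.comp Sum.inl_injective)
    ((dependsOn_backward m).mono
      (preimage_layer_subset_compl_range fun q => by simp [layer]))
    (p := fun _ => x) (fun _ _ _ => rfl)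
    (fun θ => (sum_backward_mul_hidden θ x (r := m) (k := 0) rfl).symm) θ

lemma sum_sq_fderiv_net_hidden (ℓ : Fin (d - 1)) (θ : Param d0 d n → ℝ) (x : Fin d0 → ℝ) :
    ∑ q : Fin n × Fin n,
        fderiv ℝ (fun θ => net d0 d n θ x) θ (Pi.single (.inr (.inr (ℓ, q))) 1) ^ 2 =
      ((n : ℝ) ^ d * d0)⁻¹ * layerKernel θ x (ℓ + 1) := by
  obtain ⟨r, hr⟩ : ∃ r, d - (ℓ + 1) = r + 1 := ⟨d - 1 - (ℓ + 1), by lia⟩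
  rw [layerKernel, hr]
  refine sum_sq_fderiv_net (e := fun q : Fin n × Fin n => Sum.inr (Sum.inr (ℓ, q)))
    (Sum.inr_injective.comp (Sum.inr_injective.comp (Prod.mk_right_injective ℓ)))
    ((dependsOn_backward r).mono
      (preimage_layer_subset_compl_range fun q => by
        simp only [layer, Set.mem_Ici]
        lia))
    ((dependsOn_hidden x ℓ).mono
      (preimage_layer_subset_compl_range fun q => by simp [layer]))
    (fun θ => ?_) θ
  rw [← sum_backward_mul_hidden θ x (r := r) (k := ℓ + 1) (by lia)]
  simp only [hidden_succ, weight_coe]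

lemma NTK_self (hd : 1 ≤ d) (θ : Param d0 d n → ℝ) (x : Fin d0 → ℝ) :
    NTK d0 d n θ x x = ((n : ℝ) ^ d * d0)⁻¹ * ∑ k ∈ Finset.range (d + 1), layerKernel θ x k := by
  have split_layers : Finset.range (d + 1) = Finset.range (d - 1 + 1 + 1) := by
    rw [Nat.sub_add_cancel hd]
  simp only [NTK, ← sq, Fintype.sum_sum_type]
  rw [Fintype.sum_prod_type (α₁ := Fin (d - 1)), sum_sq_fderiv_net_readout hd,
    sum_sq_fderiv_net_first hd]
  simp only [sum_sq_fderiv_net_hidden]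
  rw [split_layers, Finset.sum_range_succ, Finset.sum_range_succ', Nat.sub_add_cancel hd,
    Finset.sum_range, ← Finset.mul_sum]
  ring

lemma hidden_add (θ : Param d0 d n → ℝ) (x y : Fin d0 → ℝ) (k : ℕ) (i : Fin n) :
    hidden d0 d n θ (x + y) k i = hidden d0 d n θ x k i + hidden d0 d n θ y k i := by
  induction k generalizing i with
  | zero => simp only [hidden, Pi.add_apply, mul_add, Finset.sum_add_distrib]
  | succ k ih => simp only [hidden_succ, ih, mul_add, Finset.sum_add_distrib]

lemma net_add (θ : Param d0 d n → ℝ) (x y : Fin d0 → ℝ) :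
    net d0 d n θ (x + y) = net d0 d n θ x + net d0 d n θ y := by
  simp only [net, hidden_add, mul_add, Finset.sum_add_distrib]

lemma net_sub (θ : Param d0 d n → ℝ) (x y : Fin d0 → ℝ) :
    net d0 d n θ (x - y) = net d0 d n θ x - net d0 d n θ y := by
  rw [eq_sub_iff_add_eq, ← net_add, sub_add_cancel]

lemma NTK_polarization (θ : Param d0 d n → ℝ) (x y : Fin d0 → ℝ) :
    NTK d0 d n θ x y =
      4⁻¹ * (NTK d0 d n θ (x + y) (x + y) - NTK d0 d n θ (x - y) (x - y)) := by
  simp only [NTK, net_add, net_sub]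
  rw [fderiv_fun_add (differentiable_net x θ) (differentiable_net y θ),
    fderiv_fun_sub (differentiable_net x θ) (differentiable_net y θ),
    ← Finset.sum_sub_distrib, Finset.mul_sum]
  refine Finset.sum_congr rfl fun μ _ => ?_
  simp only [add_apply, sub_apply]
  ring

end Kernel

instance : IsProbabilityMeasure (gaussParam d0 d n) := by
  unfold gaussParam
  infer_instance

section LayerKernel

lemma lintegral_layerKernel_pow (x : Fin d0 → ℝ) {k : ℕ} (hk : k ≤ d) (s : ℕ) :
    ∫⁻ θ, ENNReal.ofReal (layerKernel θ x k) ^ s ∂gaussParam d0 d n =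
      gaussianNormSqMoment (Fin n) s ^ d * ENNReal.ofReal (∑ j, x j ^ 2) ^ s := by
  have backward_dependsOn :
      DependsOn (fun θ : Param d0 d n → ℝ => ENNReal.ofReal (backwardNormSq θ (d - k)) ^ s)
        (layer ⁻¹' Set.Ici k) := fun θ θ' h => by
    simp only [dependsOn_backwardNormSq (d - k) fun μ hμ => h μ
      (Set.Ici_subset_Ici.2 (by lia : k ≤ d + 1 - (d - k)) hμ)]
  have measurable_factor := measurable_backwardNormSq (d0 := d0) (d := d) (n := n) (d - k)
  simp only [layerKernel, ENNReal.ofReal_mul (backwardNormSq_nonneg _ _), mul_pow]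
  rw [lintegral_mul_forwardNormSq_pow x hk (by fun_prop) backward_dependsOn,
    lintegral_backwardNormSq_pow (Nat.sub_le d k), mul_right_comm, ← pow_add,
    Nat.add_sub_cancel' hk]

lemma layerKernel_nonneg (θ : Param d0 d n → ℝ) (x : Fin d0 → ℝ) (k : ℕ) :
    0 ≤ layerKernel θ x k :=
  mul_nonneg (backwardNormSq_nonneg _ _) (forwardNormSq_nonneg _ _ _)

lemma measurable_layerKernel (x : Fin d0 → ℝ) (k : ℕ) :
    Measurable fun θ : Param d0 d n → ℝ => layerKernel θ x k :=
  (measurable_backwardNormSq _).mul (measurable_forwardNormSq _ _)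

lemma memLp_two_layerKernel (x : Fin d0 → ℝ) {k : ℕ} (hk : k ≤ d) :
    MemLp (fun θ => layerKernel θ x k) 2 (gaussParam d0 d n) := by
  have measurable_kernel := measurable_layerKernel (d := d) (n := n) x k
  refine (memLp_two_iff_integrable_sq measurable_kernel.aestronglyMeasurable).2
    ⟨(measurable_kernel.pow_const 2).aestronglyMeasurable, ?_⟩
  rw [hasFiniteIntegral_iff_ofReal (Filter.Eventually.of_forall fun θ => sq_nonneg _)]
  simp only [ENNReal.ofReal_pow (layerKernel_nonneg _ _ _)]
  rw [lintegral_layerKernel_pow x hk, gaussianNormSqMoment_two]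
  finiteness

lemma integral_layerKernel (x : Fin d0 → ℝ) {k : ℕ} (hk : k ≤ d) :
    ∫ θ, layerKernel θ x k ∂gaussParam d0 d n = (n : ℝ) ^ d * ∑ j, x j ^ 2 := by
  have moment := lintegral_layerKernel_pow (n := n) x hk 1
  simp only [pow_one, gaussianNormSqMoment_one, Fintype.card_fin] at moment
  rw [integral_eq_lintegral_of_nonneg_ae
      (Filter.Eventually.of_forall fun θ => layerKernel_nonneg θ x k)
      (measurable_layerKernel x k).aestronglyMeasurable, moment,
    ENNReal.toReal_mul, ENNReal.toReal_pow, ENNReal.toReal_natCast,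
    ENNReal.toReal_ofReal (by positivity)]

lemma integral_sq_layerKernel (x : Fin d0 → ℝ) {k : ℕ} (hk : k ≤ d) :
    ∫ θ, layerKernel θ x k ^ 2 ∂gaussParam d0 d n =
      (n * (n + 2) : ℝ) ^ d * (∑ j, x j ^ 2) ^ 2 := by
  have moment := lintegral_layerKernel_pow (n := n) x hk 2
  rw [gaussianNormSqMoment_two, Fintype.card_fin] at moment
  rw [integral_eq_lintegral_of_nonneg_ae (Filter.Eventually.of_forall fun θ => sq_nonneg _)
      ((measurable_layerKernel x k).pow_const 2).aestronglyMeasurable]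
  simp only [ENNReal.ofReal_pow (layerKernel_nonneg _ _ _), moment]
  rw [ENNReal.toReal_mul, ENNReal.toReal_pow, ENNReal.toReal_pow,
    ENNReal.toReal_ofReal (by positivity)]
  norm_cast

lemma variance_layerKernel (x : Fin d0 → ℝ) {k : ℕ} (hk : k ≤ d) :
    Var[fun θ => layerKernel θ x k; gaussParam d0 d n] =
      ((n * (n + 2) : ℝ) ^ d - (n : ℝ) ^ (2 * d)) * (∑ j, x j ^ 2) ^ 2 := by
  rw [variance_eq_sub (memLp_two_layerKernel x hk), integral_layerKernel x hk]
  simp only [Pi.pow_apply, integral_sq_layerKernel x hk]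
  ring

lemma variance_layerKernel_le (hn : 1 ≤ n) (x : Fin d0 → ℝ) {k : ℕ} (hk : k ≤ d) :
    Var[fun θ => layerKernel θ x k; gaussParam d0 d n] ≤
      (n : ℝ) ^ (2 * d) * ((3 ^ d - 1) * (∑ j, x j ^ 2) ^ 2 / n) := by
  have n_pos : (0 : ℝ) < n := by exact_mod_cast hn
  have relative : (1 + (n : ℝ)⁻¹ * 2) ^ d ≤ 1 + (n : ℝ)⁻¹ * (3 ^ d - 1) := by
    have h := one_add_mul_pow_le (a := 2) zero_le_two (inv_nonneg.2 n_pos.le)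
      (inv_le_one_of_one_le₀ (by exact_mod_cast hn)) d
    rwa [show (1 : ℝ) + 2 = 3 by norm_num] at h
  have factor : (n * (n + 2) : ℝ) ^ d = (n : ℝ) ^ (2 * d) * (1 + (n : ℝ)⁻¹ * 2) ^ d := by
    rw [pow_mul, ← mul_pow]
    congr 1
    field_simp
  rw [variance_layerKernel x hk, factor]
  calc ((n : ℝ) ^ (2 * d) * (1 + (n : ℝ)⁻¹ * 2) ^ d - (n : ℝ) ^ (2 * d)) * (∑ j, x j ^ 2) ^ 2
      = (n : ℝ) ^ (2 * d) * (((1 + (n : ℝ)⁻¹ * 2) ^ d - 1) * (∑ j, x j ^ 2) ^ 2) := by ring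
    _ ≤ (n : ℝ) ^ (2 * d) * ((n : ℝ)⁻¹ * (3 ^ d - 1) * (∑ j, x j ^ 2) ^ 2) := by
        gcongr
        linarith
    _ = (n : ℝ) ^ (2 * d) * ((3 ^ d - 1) * (∑ j, x j ^ 2) ^ 2 / n) := by ring

end LayerKernel

lemma memLp_two_NTK_self (hd : 1 ≤ d) (x : Fin d0 → ℝ) :
    MemLp (fun θ => NTK d0 d n θ x x) 2 (gaussParam d0 d n) := by
  simp only [NTK_self hd]
  exact (memLp_finsetSum _ fun k hk => memLp_two_layerKernel x
    (Finset.mem_range_succ_iff.1 hk)).const_mul _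

lemma variance_NTK_self_le (hd : 1 ≤ d) (hn : 1 ≤ n) (x : Fin d0 → ℝ) :
    Var[fun θ => NTK d0 d n θ x x; gaussParam d0 d n] ≤
      ((d + 1) / d0 : ℝ) ^ 2 * (3 ^ d - 1) * (∑ j, x j ^ 2) ^ 2 / n := by
  simp only [NTK_self hd, variance_const_mul]
  calc _ ≤ ((n : ℝ) ^ d * d0)⁻¹ ^ 2 * ((d + 1 : ℕ) * ∑ k ∈ Finset.range (d + 1),
          (n : ℝ) ^ (2 * d) * ((3 ^ d - 1) * (∑ j, x j ^ 2) ^ 2 / n)) := by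
        gcongr
        refine (variance_sum_le_card_mul_sum_variance fun k hk =>
          memLp_two_layerKernel x (Finset.mem_range_succ_iff.1 hk)).trans ?_
        rw [Finset.card_range]
        gcongr with k hk
        exact variance_layerKernel_le hn x (Finset.mem_range_succ_iff.1 hk)
    _ = _ := by
        rw [Finset.sum_const, Finset.card_range, nsmul_eq_mul]
        push_cast
        rw [pow_mul']
        field_simp

lemma memLp_two_NTK (hd : 1 ≤ d) (x y : Fin d0 → ℝ) :
    MemLp (fun θ => NTK d0 d n θ x y) 2 (gaussParam d0 d n) := by
  simp only [NTK_polarization _ x y]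
  exact ((memLp_two_NTK_self hd (x + y)).sub (memLp_two_NTK_self hd (x - y))).const_mul _

lemma variance_NTK_le (hd : 1 ≤ d) (x y : Fin d0 → ℝ) :
    Var[fun θ => NTK d0 d n θ x y; gaussParam d0 d n] ≤
      8⁻¹ * (Var[fun θ => NTK d0 d n θ (x + y) (x + y); gaussParam d0 d n] +
        Var[fun θ => NTK d0 d n θ (x - y) (x - y); gaussParam d0 d n]) := by
  simp only [NTK_polarization _ x y, variance_const_mul]
  have h := variance_sub_le_two_mul (memLp_two_NTK_self (n := n) hd (x + y))
    (memLp_two_NTK_self (n := n) hd (x - y))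
  linarith

end Network

/-- for a deep linear fully connected network of depth `d` and width `n`,
the variance of the NTK at fixed inputs is bounded by `K / n` with `K` independent of `n`. -/
theorem deep_linear_fc_ntk_variance (d0 d : ℕ) (hd0 : 0 < d0) (hd : 1 ≤ d)
    (x x' : Fin d0 → ℝ) :
    ∃ K : ℝ, ∀ n : ℕ, 1 ≤ n →
      (∫ θ, (NTK d0 d n θ x x') ^ 2 ∂(gaussParam d0 d n))
        - (∫ θ, NTK d0 d n θ x x' ∂(gaussParam d0 d n)) ^ 2 ≤ K / (n : ℝ) := by
  let D (y : Fin d0 → ℝ) : ℝ := ((d + 1) / d0 : ℝ) ^ 2 * (3 ^ d - 1) * (∑ j, y j ^ 2) ^ 2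
  refine ⟨8⁻¹ * (D (x + x') + D (x - x')), fun n hn => ?_⟩
  calc _ = Var[fun θ => NTK d0 d n θ x x'; gaussParam d0 d n] :=
        (variance_eq_sub (memLp_two_NTK hd x x')).symm
    _ ≤ 8⁻¹ * (Var[fun θ => NTK d0 d n θ (x + x') (x + x'); gaussParam d0 d n] +
          Var[fun θ => NTK d0 d n θ (x - x') (x - x'); gaussParam d0 d n]) :=
        variance_NTK_le hd x x'
    _ ≤ 8⁻¹ * (D (x + x') / n + D (x - x') / n) := by
        gcongr
        · exact variance_NTK_self_le hd hn (x + x')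
        · exact variance_NTK_self_le hd hn (x - x')
    _ = 8⁻¹ * (D (x + x') + D (x - x')) / n := by ring

end DeepLinearFC
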